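/- Let X be a compact metric space with Lebesgue covering dimension dim(X) = d and let T : X → X be an injective continuous map with dim(P_n) < n/2 for every n ≤ 2d. Then (X×X)∖Δ can be written as a countable union of compact sets K_1, K_2, … such that for every i the set D_{K_i} = {h ∈ C(X,[0,1]) : h_0^{2d}(x) ≠ h_0^{2d}(y) for all (x,y) ∈ K_i} is open and dense in C(X,[0,1]) with the supremum metric. -/

import Mathlib

open Function Set Topology unitInterval

/-- A topological space `X` has Lebesgue covering dimension at most `m`:
every finite open cover admits a finite open refinement in which no point
belongs to more than `m + 1` sets. -/
def CovDimLE (X : Type*) [TopologicalSpace X] (m : ℕ) : Prop :=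
  ∀ (n : ℕ) (U : Fin n → Set X), (∀ i, IsOpen (U i)) → (⋃ i, U i) = univ →
    ∃ (k : ℕ) (V : Fin k → Set X), (∀ j, IsOpen (V j)) ∧ (⋃ j, V j) = univ ∧
      (∀ j, ∃ i, V j ⊆ U i) ∧ ∀ x : X, Nat.card {j : Fin k // x ∈ V j} ≤ m + 1

/-- The Lebesgue covering dimension of a topological space, as an element of `ℕ∞`
(`⊤` if no finite bound exists). -/
noncomputable def covDim (X : Type*) [TopologicalSpace X] : ℕ∞ :=
  sInf {e : ℕ∞ | ∃ m : ℕ, e = m ∧ CovDimLE X m}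

/-- The set of periodic points of `T` of period at most `n`. -/
def periodicLE {X : Type*} (T : X → X) (n : ℕ) : Set X :=
  {x | ∃ p, 1 ≤ p ∧ p ≤ n ∧ T^[p] x = x}

/-- The `(2d+1)`-delay observation map associated to an observable `h : C(X, [0,1])`
and the dynamics `T : X → X`: `x ↦ (h x, h (T x), …, h (T^{2d} x))`. -/
def delayMap {X : Type*} [TopologicalSpace X] (T : X → X) (d : ℕ)
    (h : C(X, I)) : X → (Fin (2 * d + 1) → I) :=
  fun x i => h (T^[(i : ℕ)] x)


/-- `D_K`: the set of observables `h` such that the `(2d+1)`-delay observation map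
separates every pair `(x, y) ∈ K`. -/
def DSet {X : Type*} [TopologicalSpace X] (T : X → X) (d : ℕ)
    (K : Set (X × X)) : Set C(X, I) :=
  {h | ∀ p ∈ K, delayMap T d h p.1 ≠ delayMap T d h p.2}

/-!
The off-diagonal pairs are stratified by the (truncated) periods of `x` and `y` and by whether
their orbit segments meet. A stratum is locally closed, hence σ-compact, and near each of its
points the iterates of a compact piece form towers with disjoint levels. By the Tietze extension
theorem the values of an observable on such a tower can be perturbed freely, so density of `D_K`
becomes a question about generic maps of compacta into cubes. A generic map of a compactum of
dimension `m` into `[0,1]^N` misses any countable family of affine subspaces of dimension less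
than `N - m`: it is barycentric with vertices in general position.

If `y = T^l x` and `x` has period `N`, the delay vectors agree only when the observations along the
orbit of `x` form a vector in which at least `min(N, 2d+1)` coordinates are required to equal
another one. Such vectors form a subspace of codimension at least half of `min(N, 2d+1)`, which
exceeds the dimension `m` of the stratum since `2m < N` and `m ≤ d`. If the orbit segments are
disjoint, one first moves the observations along the orbit of `x` into finitely many affine
subspaces whose dimension is that of the stratum of `x`, and then lets the observations along the
orbit of `y` avoid them.
-/

section AffineGeometry

open Module

theorem disjoint_affineSpan_insert {k V P : Type*} [DivisionRing k] [AddCommGroup V] [Module k V]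
    [AddTorsor V P] {A : AffineSubspace k P} {s : Set P} {p : P}
    (hs : Disjoint (affineSpan k s : Set P) A) (hp : p ∉ affineSpan k s ⊔ A) :
    Disjoint (affineSpan k (insert p s) : Set P) A := by
  refine Set.disjoint_left.2 fun x hx hxA => ?_
  rcases s.eq_empty_or_nonempty with rfl | ⟨q, hq⟩
  · rw [insert_empty_eq, SetLike.mem_coe, AffineSubspace.mem_affineSpan_singleton] at hx
    exact hp (le_sup_right (a := affineSpan k ∅) (hx ▸ hxA))
  · have hq : q ∈ affineSpan k s := subset_affineSpan k s hq
    rw [← affineSpan_insert_affineSpan, SetLike.mem_coe,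
      AffineSubspace.mem_affineSpan_insert_iff hq] at hx
    obtain ⟨r, y, hy, rfl⟩ := hx
    rcases eq_or_ne r 0 with rfl | hr
    · rw [zero_smul, zero_vadd] at hxA
      exact Set.disjoint_left.1 hs hy hxA
    · have hpq : p = r⁻¹ • ((r • (p -ᵥ q) +ᵥ y) -ᵥ y) +ᵥ q := by
        rw [vadd_vsub, inv_smul_smul₀ hr, vsub_vadd]
      rw [hpq] at hp
      exact hp (AffineSubspace.smul_vsub_vadd_mem _ _ (le_sup_right (a := affineSpan k s) hxA)
        (le_sup_left (b := A) hy) (le_sup_left (b := A) hq))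

theorem finrank_direction_affineSpan_sup_le {k V P : Type*} [DivisionRing k] [AddCommGroup V]
    [Module k V] [AddTorsor V P] [FiniteDimensional k V] {s : Set P} (hs : s.Finite)
    (A : AffineSubspace k P) :
    finrank k (affineSpan k s ⊔ A).direction ≤ s.ncard + finrank k A.direction := by
  induction s, hs using Set.Finite.induction_on with
  | empty => rw [AffineSubspace.span_empty, bot_sup_eq, ncard_empty, zero_add]
  | @insert p s hp hs ih =>
    have hsup : affineSpan k (insert p s) ⊔ A =
        affineSpan k (insert p (affineSpan k s ⊔ A : AffineSubspace k P)) := by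
      rw [insert_eq, insert_eq, AffineSubspace.span_union, AffineSubspace.span_union,
        AffineSubspace.affineSpan_coe, sup_assoc]
    rw [ncard_insert_of_notMem hp hs, hsup, direction_affineSpan]
    have := finrank_vectorSpan_insert_le (affineSpan k s ⊔ A) p
    omega

theorem finrank_vectorSpan_le_of_ncard_le {k V P : Type*} [DivisionRing k] [AddCommGroup V]
    [Module k V] [AddTorsor V P] {s : Set P} (hs : s.Finite) {m : ℕ} (hm : s.ncard ≤ m + 1) :
    finrank k (vectorSpan k s) ≤ m := by
  rcases s.eq_empty_or_nonempty with rfl | hne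
  · rw [vectorSpan_empty, finrank_bot]
    exact m.zero_le
  · have := hs.fintype
    have := hne.to_subtype
    have hrange := finrank_vectorSpan_range_add_one_le k ((↑) : s → P)
    rw [Subtype.range_coe, ← Nat.card_eq_fintype_card, Nat.card_coe_set_eq] at hrange
    omega

theorem dense_biInter_compl_affineSubspace {E : Type*} [NormedAddCommGroup E] [NormedSpace ℝ E]
    [FiniteDimensional ℝ E] {𝒜 : Set (AffineSubspace ℝ E)} (h𝒜 : 𝒜.Countable)
    (htop : ∀ A ∈ 𝒜, A ≠ ⊤) : Dense (⋂ A ∈ 𝒜, (A : Set E)ᶜ) := by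
  have := FiniteDimensional.complete ℝ E
  refine dense_biInter_of_isOpen (fun A _ => A.closed_of_finiteDimensional.isOpen_compl) h𝒜
    fun A hA => interior_eq_empty_iff_dense_compl.1 (not_nonempty_iff_eq_empty.1 fun hne => ?_)
  refine htop A hA (top_le_iff.1 ?_)
  rw [← isOpen_interior.affineSpan_eq_top hne]
  exact affineSpan_le.2 interior_subset

theorem exists_mem_forall_notMem_affineSpan_image_sup {E κ : Type*} [NormedAddCommGroup E]
    [NormedSpace ℝ E] [FiniteDimensional ℝ E] [Finite κ] {O : Set E} (hO : IsOpen O)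
    (hne : O.Nonempty) (v : κ → E) {𝒜 : Set (AffineSubspace ℝ E)} (h𝒜 : 𝒜.Countable) {m : ℕ}
    (hm : ∀ A ∈ 𝒜, finrank ℝ A.direction + m < finrank ℝ E) :
    ∃ w ∈ O, ∀ t : Set κ, t.ncard ≤ m → ∀ A ∈ 𝒜, w ∉ affineSpan ℝ (v '' t) ⊔ A := by
  let ℬ : Set (AffineSubspace ℝ E) :=
    image2 (fun t A => affineSpan ℝ (v '' t) ⊔ A) {t | t.ncard ≤ m} 𝒜
  have hℬtop : ∀ B ∈ ℬ, B ≠ ⊤ := by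
    rintro _ ⟨t, ht : t.ncard ≤ m, A, hA, rfl⟩ (htop : affineSpan ℝ (v '' t) ⊔ A = ⊤)
    have hdim := finrank_direction_affineSpan_sup_le (t.toFinite.image v) A
    rw [htop, AffineSubspace.direction_top, finrank_top] at hdim
    have himage := ncard_image_le (f := v) t.toFinite
    have hA := hm A hA
    omega
  obtain ⟨w, hwO, hw⟩ := (dense_biInter_compl_affineSubspace
    ((to_countable _).image2 h𝒜 _) hℬtop).exists_mem_open hO hne
  exact ⟨w, hw, fun t ht A hA => mem_iInter₂.1 hwO _ (mem_image2_of_mem ht hA)⟩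

theorem exists_forall_mem_forall_disjoint_affineSpan_image {E κ : Type*} [NormedAddCommGroup E]
    [NormedSpace ℝ E] [FiniteDimensional ℝ E] [Finite κ] {O : κ → Set E} (hO : ∀ k, IsOpen (O k))
    (hne : ∀ k, (O k).Nonempty) {𝒜 : Set (AffineSubspace ℝ E)} (h𝒜 : 𝒜.Countable) {m : ℕ}
    (hm : ∀ A ∈ 𝒜, finrank ℝ A.direction + m < finrank ℝ E) :
    ∃ v : κ → E, (∀ k, v k ∈ O k) ∧ ∀ t : Set κ, t.ncard ≤ m + 1 →
      ∀ A ∈ 𝒜, Disjoint (affineSpan ℝ (v '' t) : Set E) A := by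
  classical
  suffices H : ∀ s : Set κ, ∃ v : κ → E, (∀ k, v k ∈ O k) ∧ ∀ t ⊆ s, t.ncard ≤ m + 1 →
      ∀ A ∈ 𝒜, Disjoint (affineSpan ℝ (v '' t) : Set E) A by
    obtain ⟨v, hvO, hv⟩ := H univ
    exact ⟨v, hvO, fun t => hv t (subset_univ t)⟩
  intro s
  induction s, s.toFinite using Set.Finite.induction_on with
  | empty =>
    choose v hv using hne
    exact ⟨v, hv, fun t ht _ A _ => by simp [subset_empty_iff.1 ht]⟩
  | @insert a s _ _ ih =>
    obtain ⟨v, hvO, hv⟩ := ih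
    obtain ⟨w, hwO, hw⟩ := exists_mem_forall_notMem_affineSpan_image_sup (hO a) (hne a) v h𝒜 hm
    refine ⟨update v a w, fun k => ?_, fun t ht htm A hA => ?_⟩
    · rcases eq_or_ne k a with rfl | hk
      · rwa [update_self]
      · rw [update_of_ne hk]
        exact hvO k
    · have hts : t \ {a} ⊆ s := sdiff_singleton_subset_iff.2 ht
      have hrest : update v a w '' (t \ {a}) = v '' (t \ {a}) :=
        image_congr fun k hk => update_of_ne hk.2 _ _
      by_cases hat : a ∈ t
      · have hcard := ncard_sdiff_singleton_add_one hat
        rw [← insert_sdiff_self_of_mem hat, image_insert_eq, update_self, hrest]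
        exact disjoint_affineSpan_insert (hv _ hts (by omega) A hA) (hw _ (by omega) A hA)
      · rw [← sdiff_singleton_eq_self hat, hrest]
        exact hv _ hts ((ncard_sdiff_singleton_le t a).trans htm) A hA

end AffineGeometry

section CoveringDimension

theorem CovDimLE.mono {Y : Type*} [TopologicalSpace Y] {m n : ℕ} (hY : CovDimLE Y m)
    (hmn : m ≤ n) : CovDimLE Y n := by
  intro k U hU hcov
  obtain ⟨l, V, hV, hVcov, hVU, hVm⟩ := hY k U hU hcov
  exact ⟨l, V, hV, hVcov, hVU, fun y => (hVm y).trans (Nat.succ_le_succ hmn)⟩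

theorem covDim_le_natCast_iff {Y : Type*} [TopologicalSpace Y] {m : ℕ} :
    covDim Y ≤ m ↔ CovDimLE Y m := by
  refine ⟨fun h => ?_, fun h => sInf_le ⟨m, rfl, h⟩⟩
  obtain ⟨_, ⟨k, rfl, hk⟩, hkm⟩ := sInf_lt_iff.1 (h.trans_lt (Nat.cast_lt.2 m.lt_succ_self))
  exact hk.mono (Nat.lt_succ_iff.1 (Nat.cast_lt.1 hkm))

theorem CovDimLE.of_isClosedEmbedding {Y Z : Type*} [TopologicalSpace Y] [TopologicalSpace Z]
    {e : Y → Z} (he : IsClosedEmbedding e) {m : ℕ} (hZ : CovDimLE Z m) : CovDimLE Y m := by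
  intro n U hU hcov
  rcases isEmpty_or_nonempty Y with hY | ⟨⟨y₀⟩⟩
  · exact ⟨0, fun i => i.elim0, fun i => i.elim0, Subsingleton.elim _ _, fun i => i.elim0,
      isEmptyElim⟩
  obtain ⟨i₀, -⟩ := mem_iUnion.1 (hcov.ge (mem_univ y₀))
  choose O hO hOU using fun i => he.isInducing.isOpen_iff.1 (hU i)
  obtain ⟨k, V, hV, hVcov, hVref, hVord⟩ := hZ n (fun i => O i ∪ (range e)ᶜ)
    (fun i => (hO i).union he.isClosed_range.isOpen_compl) (by
      refine eq_univ_of_forall fun z => ?_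
      by_cases hz : z ∈ range e
      · obtain ⟨y, rfl⟩ := hz
        obtain ⟨i, hi⟩ := mem_iUnion.1 (hcov.ge (mem_univ y))
        exact mem_iUnion.2 ⟨i, Or.inl ((hOU i).ge hi)⟩
      · exact mem_iUnion.2 ⟨i₀, Or.inr hz⟩)
  refine ⟨k, fun j => e ⁻¹' V j, fun j => (hV j).preimage he.continuous, ?_, fun j => ?_,
    fun y => hVord (e y)⟩
  · rw [← preimage_iUnion, hVcov, preimage_univ]
  · obtain ⟨i, hi⟩ := hVref j
    exact ⟨i, fun y hy => (hOU i).le ((hi hy).resolve_right fun h => h (mem_range_self y))⟩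

theorem CovDimLE.exists_partitionOfUnity {Y E : Type*} [TopologicalSpace Y] [CompactSpace Y]
    [T2Space Y] [PseudoMetricSpace E] {m : ℕ} (hY : CovDimLE Y m) (F : C(Y, E)) {ε : ℝ}
    (hε : 0 < ε) :
    ∃ (k : ℕ) (ρ : PartitionOfUnity (Fin k) Y) (c : Fin k → Y),
      (∀ y, (support fun j => ρ j y).ncard ≤ m + 1) ∧
      ∀ j y, ρ j y ≠ 0 → dist (F (c j)) (F y) < ε := by
  obtain ⟨t, ht⟩ := isCompact_univ.elim_finite_subcover (fun x => F ⁻¹' Metric.ball (F x) ε)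
    (fun x => Metric.isOpen_ball.preimage F.continuous)
    (fun x _ => mem_iUnion.2 ⟨x, Metric.mem_ball_self hε⟩)
  let center : Fin t.card → Y := fun j => t.equivFin.symm j
  obtain ⟨k, V, hV, hVcov, hVref, hVord⟩ :=
    hY t.card (fun j => F ⁻¹' Metric.ball (F (center j)) ε)
    (fun j => Metric.isOpen_ball.preimage F.continuous) (by
      refine eq_univ_of_forall fun y => ?_
      obtain ⟨x, hx, hy⟩ := mem_iUnion₂.1 (ht (mem_univ y))
      exact mem_iUnion.2 ⟨t.equivFin ⟨x, hx⟩, by simpa [center] using hy⟩)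
  choose r hr using hVref
  obtain ⟨ρ, hρ⟩ := PartitionOfUnity.exists_isSubordinate isClosed_univ V hV hVcov.ge
  have hmem : ∀ j y, ρ j y ≠ 0 → y ∈ V j := fun j y hy => hρ j (subset_tsupport _ hy)
  refine ⟨k, ρ, fun j => center (r j), fun y => ?_, fun j y hy => ?_⟩
  · exact (ncard_le_ncard (fun j => hmem j y) (toFinite _)).trans (hVord y)
  · rw [dist_comm]
    exact hr j (hmem j y hy)

end CoveringDimension

section BarycentricMap

variable {Y E ι : Type*} [TopologicalSpace Y] [NormedAddCommGroup E] [NormedSpace ℝ E]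

/-- The map of `Y` into the polyhedron with vertices `v j` whose barycentric coordinates are the
functions `ρ j` of a partition of unity. -/
noncomputable def barycentricMap (ρ : PartitionOfUnity ι Y) (v : ι → E) : C(Y, E) where
  toFun y := ∑ᶠ j, ρ j y • v j
  continuous_toFun := ρ.continuous_finsum_smul fun _ _ _ => continuousAt_const

theorem barycentricMap_mem_of_convex (ρ : PartitionOfUnity ι Y) {v : ι → E} {C : Set E}
    (hC : Convex ℝ C) {y : Y} (hv : ∀ j, ρ j y ≠ 0 → v j ∈ C) : barycentricMap ρ v y ∈ C :=
  ρ.finsum_smul_mem_convex (g := fun j _ => v j) (mem_univ y) hv hC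

theorem barycentricMap_mem_affineSpan (ρ : PartitionOfUnity ι Y) (v : ι → E) (y : Y) :
    barycentricMap ρ v y ∈ affineSpan ℝ (v '' support fun j => ρ j y) :=
  barycentricMap_mem_of_convex ρ (AffineSubspace.convex _) fun _ hj =>
    subset_affineSpan ℝ _ (mem_image_of_mem v hj)

theorem dist_barycentricMap_lt (ρ : PartitionOfUnity ι Y) {v : ι → E} {x : E} {ε : ℝ} {y : Y}
    (hv : ∀ j, ρ j y ≠ 0 → dist (v j) x < ε) : dist (barycentricMap ρ v y) x < ε :=
  barycentricMap_mem_of_convex ρ (convex_ball x ε) hv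

end BarycentricMap

section Approximation

open Module

variable {Y E : Type*} [TopologicalSpace Y] [CompactSpace Y] [T2Space Y] [NormedAddCommGroup E]
  [NormedSpace ℝ E] {m : ℕ} {C : Set E} (F : C(Y, E)) {ε : ℝ}

theorem CovDimLE.exists_dist_lt_forall_mem_affineSubspace (hY : CovDimLE Y m) (hC : Convex ℝ C)
    (hF : ∀ y, F y ∈ C) (hε : 0 < ε) :
    ∃ G : C(Y, E), (∀ y, G y ∈ C) ∧ (∀ y, dist (G y) (F y) < ε) ∧
      ∃ 𝒜 : Set (AffineSubspace ℝ E), 𝒜.Finite ∧ (∀ A ∈ 𝒜, finrank ℝ A.direction ≤ m) ∧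
        ∀ y, ∃ A ∈ 𝒜, G y ∈ A := by
  obtain ⟨k, ρ, c, hρm, hρF⟩ := hY.exists_partitionOfUnity F hε
  let v : Fin k → E := fun j => F (c j)
  refine ⟨barycentricMap ρ v, fun y => barycentricMap_mem_of_convex ρ hC fun j _ => hF (c j),
    fun y => dist_barycentricMap_lt ρ fun j => hρF j y,
    (fun t : Set (Fin k) => affineSpan ℝ (v '' t)) '' {t | t.ncard ≤ m + 1},
    (toFinite _).image _, ?_, fun y => ⟨_, mem_image_of_mem _ (hρm y),
      barycentricMap_mem_affineSpan ρ v y⟩⟩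
  rintro _ ⟨t, ht : t.ncard ≤ m + 1, rfl⟩
  rw [direction_affineSpan]
  exact finrank_vectorSpan_le_of_ncard_le (toFinite _) ((ncard_image_le (toFinite _)).trans ht)

theorem CovDimLE.exists_dist_lt_forall_notMem [FiniteDimensional ℝ E] (hY : CovDimLE Y m)
    (hC : Convex ℝ C) (hCint : (interior C).Nonempty) (hF : ∀ y, F y ∈ C) (hε : 0 < ε)
    {𝒜 : Set (AffineSubspace ℝ E)} (h𝒜 : 𝒜.Countable)
    (hm : ∀ A ∈ 𝒜, finrank ℝ A.direction + m < finrank ℝ E) :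
    ∃ G : C(Y, E), (∀ y, G y ∈ C) ∧ (∀ y, dist (G y) (F y) < ε) ∧ ∀ A ∈ 𝒜, ∀ y, G y ∉ A := by
  obtain ⟨k, ρ, c, hρm, hρF⟩ := hY.exists_partitionOfUnity F (half_pos hε)
  have hne : ∀ j, (interior C ∩ Metric.ball (F (c j)) (ε / 2)).Nonempty := fun j => by
    have hcl : F (c j) ∈ closure (interior C) :=
      (hC.closure_interior_eq_closure_of_nonempty_interior hCint).ge (subset_closure (hF (c j)))
    rw [inter_comm]
    exact mem_closure_iff.1 hcl _ Metric.isOpen_ball (Metric.mem_ball_self (half_pos hε))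
  obtain ⟨v, hv, hvA⟩ := exists_forall_mem_forall_disjoint_affineSpan_image
    (fun j => isOpen_interior.inter Metric.isOpen_ball) hne h𝒜 hm
  refine ⟨barycentricMap ρ v,
    fun y => barycentricMap_mem_of_convex ρ hC fun j _ => interior_subset (hv j).1,
    fun y => dist_barycentricMap_lt ρ fun j hj => ?_, fun A hA y => ?_⟩
  · linarith [dist_triangle (v j) (F (c j)) (F y), Metric.mem_ball.1 (hv j).2, hρF j y hj]
  · exact Set.disjoint_left.1 (hvA _ (hρm y) A hA) (barycentricMap_mem_affineSpan ρ v y)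

end Approximation

section Cube

open Module

variable {Y Z ι κ : Type*} [TopologicalSpace Y] [CompactSpace Y] [TopologicalSpace Z]
  [CompactSpace Z] [Fintype ι] [Fintype κ]

theorem exists_dist_lt_forall_coe_eq {F : C(Y, ι → I)} {G : C(Y, ι → ℝ)} {ε : ℝ} (hε : 0 < ε)
    (hG : ∀ y, G y ∈ Icc 0 1) (hGF : ∀ y, dist (G y) (fun i => F y i) < ε) :
    ∃ H : C(Y, ι → I), dist H F < ε ∧ ∀ y, (fun i => (H y i : ℝ)) = G y := by
  refine ⟨⟨fun y i => ⟨G y i, (hG y).1 i, (hG y).2 i⟩, by fun_prop⟩, ?_, fun y => rfl⟩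
  exact (ContinuousMap.dist_lt_iff hε).2 hGF

variable [T2Space Y] [T2Space Z] {m n : ℕ}

theorem CovDimLE.dense_forall_notMem (hY : CovDimLE Y m) {𝒜 : Set (AffineSubspace ℝ (ι → ℝ))}
    (h𝒜 : 𝒜.Countable) (hm : ∀ A ∈ 𝒜, finrank ℝ A.direction + m < Fintype.card ι) :
    Dense {G : C(Y, ι → I) | ∀ A ∈ 𝒜, ∀ y, (fun i => (G y i : ℝ)) ∉ A} := by
  refine Metric.dense_iff.2 fun F ε hε => ?_
  have hint : (interior (Icc (0 : ι → ℝ) 1)).Nonempty :=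
    ⟨fun _ => 1 / 2, mem_interior_iff_mem_nhds.2
      (pi_Icc_mem_nhds (fun _ => by norm_num) (fun _ => by norm_num))⟩
  obtain ⟨G, hG, hGF, hGA⟩ := hY.exists_dist_lt_forall_notMem
    ⟨fun y i => (F y i : ℝ), by fun_prop⟩ (convex_Icc 0 1) hint
    (fun y => ⟨fun i => (F y i).2.1, fun i => (F y i).2.2⟩) hε h𝒜
    (by simpa only [finrank_fintype_fun_eq_card] using hm)
  obtain ⟨H, hHF, hHG⟩ := exists_dist_lt_forall_coe_eq hε hG hGF
  exact ⟨H, hHF, fun A hA y => hHG y ▸ hGA A hA y⟩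

theorem CovDimLE.exists_dist_lt_forall_coe_mem_affineSubspace (hY : CovDimLE Y m)
    (F : C(Y, ι → I)) {ε : ℝ} (hε : 0 < ε) :
    ∃ G : C(Y, ι → I), dist G F < ε ∧ ∃ 𝒜 : Set (AffineSubspace ℝ (ι → ℝ)), 𝒜.Finite ∧
      (∀ A ∈ 𝒜, finrank ℝ A.direction ≤ m) ∧ ∀ y, ∃ A ∈ 𝒜, (fun i => (G y i : ℝ)) ∈ A := by
  obtain ⟨G, hG, hGF, 𝒜, h𝒜, h𝒜m, hG𝒜⟩ := hY.exists_dist_lt_forall_mem_affineSubspace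
    ⟨fun y i => (F y i : ℝ), by fun_prop⟩ (convex_Icc 0 1)
    (fun y => ⟨fun i => (F y i).2.1, fun i => (F y i).2.2⟩) hε
  obtain ⟨H, hHF, hHG⟩ := exists_dist_lt_forall_coe_eq hε hG hGF
  exact ⟨H, hHF, 𝒜, h𝒜, h𝒜m, fun y => hHG y ▸ hG𝒜 y⟩

theorem CovDimLE.dense_forall_comp_ne {ι : Type*} [Finite ι] (hY : CovDimLE Y m) (hZ : CovDimLE Z n)
    (hmn : m + n < Fintype.card κ) (a : κ → ι) :
    Dense {G : C(Y, ι → I) × C(Z, κ → I) | ∀ y z, G.1 y ∘ a ≠ G.2 z} := by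
  have := Fintype.ofFinite ι
  refine Metric.dense_iff.2 fun F ε hε => ?_
  obtain ⟨G₁, hG₁, 𝒜, h𝒜, h𝒜m, hG𝒜⟩ :=
    hY.exists_dist_lt_forall_coe_mem_affineSubspace F.1 hε
  let restrict : (ι → ℝ) →ᵃ[ℝ] κ → ℝ := (LinearMap.funLeft ℝ ℝ a).toAffineMap
  have hdim : ∀ A ∈ AffineSubspace.map restrict '' 𝒜,
      finrank ℝ A.direction + n < Fintype.card κ := by
    rintro _ ⟨A, hA, rfl⟩
    rw [AffineSubspace.map_direction]
    have := (Submodule.finrank_map_le restrict.linear A.direction).trans (h𝒜m A hA)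
    omega
  obtain ⟨G₂, hG₂, hG₂A⟩ :=
    Metric.dense_iff.1 (hZ.dense_forall_notMem (h𝒜.image _).countable hdim) F.2 ε hε
  refine ⟨(G₁, G₂), max_lt hG₁ hG₂, fun y z hyz => ?_⟩
  obtain ⟨A, hA, hyA⟩ := hG𝒜 y
  refine hG₂A _ (mem_image_of_mem _ hA) z ?_
  have : (fun k => (G₂ z k : ℝ)) = restrict (fun i => (G₁ y i : ℝ)) := by
    funext k
    exact congrArg Subtype.val (congrFun hyz k).symm
  rw [this]
  exact AffineSubspace.mem_map_of_mem _ hyA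

end Cube

section ShiftInvariant

open Module

theorem finrank_le_card_range_eval {k ι : Type*} [DivisionRing k] [Finite ι]
    (W : Submodule k (ι → k)) : finrank k W ≤ (range fun (i : ι) (v : W) => v.1 i).ncard := by
  classical
  have := Fintype.ofFinite ι
  let coord : ι → range fun (i : ι) (v : W) => v.1 i := rangeFactorization _
  have hle : W ≤ (LinearMap.funLeft k k coord).range := fun v hv =>
    ⟨fun q => q.1 ⟨v, hv⟩, rfl⟩
  calc finrank k W ≤ finrank k (LinearMap.funLeft k k coord).range := Submodule.finrank_mono hle
    _ ≤ finrank k (range (fun (i : ι) (v : W) => v.1 i) → k) := LinearMap.finrank_range_le _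
    _ = (range fun (i : ι) (v : W) => v.1 i).ncard := by
      rw [finrank_fintype_fun_eq_card, ← Nat.card_eq_fintype_card, Nat.card_coe_set_eq]

theorem two_mul_card_image_add_card_le {α β : Type*} [Fintype α] [DecidableEq β] (f : α → β)
    {s : Finset α} (hs : ∀ a ∈ s, ∃ b ≠ a, f b = f a) :
    2 * (Finset.univ.image f).card + s.card ≤ 2 * Fintype.card α := by
  classical
  have hfiber : ∀ q ∈ Finset.univ.image f,
      2 + (s.filter (f · = q)).card ≤ 2 * (Finset.univ.filter (f · = q)).card := by
    intro q hq
    obtain ⟨a, -, rfl⟩ := Finset.mem_image.1 hq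
    have hle : (s.filter (f · = f a)).card ≤ (Finset.univ.filter (f · = f a)).card :=
      Finset.card_le_card (Finset.filter_subset_filter _ s.subset_univ)
    rcases (s.filter (f · = f a)).eq_empty_or_nonempty with hempty | ⟨c, hc⟩
    · have hpos : 0 < (Finset.univ.filter (f · = f a)).card := Finset.card_pos.2 ⟨a, by simp⟩
      rw [hempty, Finset.card_empty]
      omega
    · obtain ⟨hcs, hca⟩ := Finset.mem_filter.1 hc
      obtain ⟨b, hbc, hb⟩ := hs c hcs
      have htwo : 1 < (Finset.univ.filter (f · = f a)).card :=
        Finset.one_lt_card.2 ⟨b, by simp [hb, hca], c, by simp [hca], hbc⟩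
      omega
  have hmaps : ∀ a, f a ∈ Finset.univ.image f := fun a => Finset.mem_image_of_mem f (by simp)
  have hsum := Finset.sum_le_sum hfiber
  rw [Finset.sum_add_distrib, Finset.sum_const, smul_eq_mul, ← Finset.mul_sum,
    ← Finset.card_eq_sum_card_fiberwise fun a _ => hmaps a,
    ← Finset.card_eq_sum_card_fiberwise fun a _ => hmaps a, Finset.card_univ] at hsum
  omega

theorem two_mul_finrank_add_card_le {k ι : Type*} [DivisionRing k] [Fintype ι]
    {W : Submodule k (ι → k)} {s : Finset ι} (hs : ∀ i ∈ s, ∃ j ≠ i, ∀ v ∈ W, v j = v i) :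
    2 * finrank k W + s.card ≤ 2 * Fintype.card ι := by
  classical
  have hW := finrank_le_card_range_eval W
  have hcard := two_mul_card_image_add_card_le (fun (i : ι) (v : W) => v.1 i) fun i hi =>
    (hs i hi).imp fun _ ⟨hji, hj⟩ => ⟨hji, funext fun v => hj v v.2⟩
  rw [← image_univ, ← Finset.coe_univ, ← Finset.coe_image, ncard_coe_finset] at hW
  omega

/-- The vectors indexed by `ℤ/N` whose first `k` coordinates do not change under translation of
the index by `l`; indices are reduced modulo `N` by `Fin.ofNat`. -/
def shiftInvariant (N k l : ℕ) [NeZero N] : Submodule ℝ (Fin N → ℝ) where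
  carrier := {v | ∀ i < k, v (Fin.ofNat N (i + l)) = v (Fin.ofNat N i)}
  zero_mem' _ _ := rfl
  add_mem' hv hw i hi := congrArg₂ (· + ·) (hv i hi) (hw i hi)
  smul_mem' c _ hv i hi := congrArg (c * ·) (hv i hi)

theorem two_mul_finrank_shiftInvariant_add_min_le {N k l : ℕ} [NeZero N] (hl : ¬ N ∣ l) :
    2 * finrank ℝ (shiftInvariant N k l) + min N k ≤ 2 * N := by
  have hne : ∀ i : Fin N, Fin.ofNat N (i + l) ≠ i := fun i hi => hl <| by
    have hmod : (i + l) % N = (i + 0) % N := by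
      rw [add_zero, Nat.mod_eq_of_lt i.2]
      exact congrArg Fin.val hi
    exact (Nat.modEq_zero_iff_dvd).1 (Nat.ModEq.add_left_cancel' i hmod)
  have := two_mul_finrank_add_card_le (W := shiftInvariant N k l)
    (s := Finset.univ.filter fun i : Fin N => (i : ℕ) < k) fun i hi =>
      ⟨_, hne i, fun v hv => by
        have := hv i (Finset.mem_filter.1 hi).2
        rwa [Fin.ofNat_val_eq_self] at this⟩
  rwa [Fin.card_filter_val_lt, Fintype.card_fin] at this

end ShiftInvariant

section Extension

theorem exists_continuousMap_dist_le_of_isClosedEmbedding {X Z : Type*} [TopologicalSpace X]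
    [CompactSpace X] [NormalSpace X] [TopologicalSpace Z] [CompactSpace Z] {e : Z → X}
    (he : IsClosedEmbedding e) (f : C(X, I)) (F : C(Z, I)) {ε : ℝ} (hε : 0 ≤ ε)
    (hF : ∀ z, dist (F z) (f (e z)) ≤ ε) :
    ∃ h : C(X, I), dist h f ≤ ε ∧ ∀ z, h (e z) = F z := by
  let Δ : C(Z, ℝ) := ⟨fun z => F z - f (e z), by have := he.continuous; fun_prop⟩
  obtain ⟨g, hg, hge⟩ := BoundedContinuousFunction.exists_extension_norm_eq_of_isClosedEmbedding
    (BoundedContinuousFunction.mkOfCompact Δ) he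
  have hgε : ‖g‖ ≤ ε := hg.trans_le ((BoundedContinuousFunction.norm_le hε).2 hF)
  refine ⟨⟨fun x => projIcc 0 1 zero_le_one (f x + g x), by fun_prop⟩,
    (ContinuousMap.dist_le hε).2 fun x => ?_, fun z => ?_⟩
  · calc dist (projIcc 0 1 zero_le_one (f x + g x)) (f x)
        = |(projIcc 0 1 zero_le_one (f x + g x) : ℝ) - projIcc 0 1 zero_le_one (f x : ℝ)| := by
          rw [projIcc_val]; rfl
      _ ≤ |f x + g x - f x| := abs_projIcc_sub_projIcc _
      _ = ‖g x‖ := by rw [add_sub_cancel_left, Real.norm_eq_abs]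
      _ ≤ ε := (g.norm_coe_le_norm x).trans hgε
  · have hgz : g (e z) = F z - f (e z) := congrFun hge z
    rw [ContinuousMap.coe_mk, hgz, add_sub_cancel, projIcc_val]

end Extension

section Tower

variable {X : Type*} [TopologicalSpace X] {T : X → X} {p q N : ℕ}

/-- The evaluation map of the tower of height `N` over the base `Y`, whose levels are
`Y, T Y, …, T^{N-1} Y`; the levels are pairwise disjoint when this map is injective. -/
def towerMap (T : X → X) (N : ℕ) (Y : Set X) : Fin N × Y → X :=
  fun z => T^[z.1] z.2

theorem continuous_towerMap (hT : Continuous T) (N : ℕ) (Y : Set X) :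
    Continuous (towerMap T N Y) :=
  continuous_prod_of_discrete_left.2 fun i => (hT.iterate i).comp continuous_subtype_val

theorem exists_nhds_injective_sumElim_towerMap [T2Space X] (hT : Continuous T) (hTi : Injective T)
    {x y : X}
    (hxy : Injective (Sum.elim (fun i : Fin p => T^[i] x) (fun j : Fin q => T^[j] y))) :
    ∃ U ∈ 𝓝 x, ∃ V ∈ 𝓝 y, ∀ Y ⊆ U, ∀ Z ⊆ V,
      Injective (Sum.elim (towerMap T p Y) (towerMap T q Z)) := by
  obtain ⟨O, hO, hdisj⟩ := Pairwise.exists_mem_filter_of_disjoint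
    fun a b hab => disjoint_nhds_nhds.2 (hxy.ne hab)
  refine ⟨⋂ i : Fin p, T^[i] ⁻¹' O (.inl i), Filter.iInter_mem.2 fun i =>
      (hT.iterate i).continuousAt (hO (.inl i)),
    ⋂ j : Fin q, T^[j] ⁻¹' O (.inr j), Filter.iInter_mem.2 fun j =>
      (hT.iterate j).continuousAt (hO (.inr j)), fun Y hY Z hZ => ?_⟩
  have hmemY : ∀ a : Fin p × Y, towerMap T p Y a ∈ O (.inl a.1) := fun a =>
    mem_iInter.1 (hY a.2.2) a.1
  have hmemZ : ∀ b : Fin q × Z, towerMap T q Z b ∈ O (.inr b.1) := fun b =>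
    mem_iInter.1 (hZ b.2.2) b.1
  have hindex : ∀ {a b} {w : X}, w ∈ O a → w ∈ O b → a = b := fun {a b w} ha hb => by
    by_contra hab
    exact Set.disjoint_left.1 (hdisj hab) ha hb
  refine Injective.sumElim (fun a b hab => ?_) (fun a b hab => ?_) fun a b hab => ?_
  · have hlevel := Sum.inl_injective (hindex (hmemY a) (hab ▸ hmemY b))
    exact Prod.ext hlevel (Subtype.ext (hTi.iterate a.1 (by
      simpa only [towerMap, hlevel] using hab)))
  · have hlevel := Sum.inr_injective (hindex (hmemZ a) (hab ▸ hmemZ b))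
    exact Prod.ext hlevel (Subtype.ext (hTi.iterate a.1 (by
      simpa only [towerMap, hlevel] using hab)))
  · exact Sum.inl_ne_inr (hindex (hmemY a) (hab ▸ hmemZ b))

theorem exists_nhds_injective_towerMap [T2Space X] (hT : Continuous T) (hTi : Injective T)
    {x : X} (hx : Injective fun i : Fin N => T^[i] x) :
    ∃ U ∈ 𝓝 x, ∀ Y ⊆ U, Injective (towerMap T N Y) := by
  obtain ⟨U, hU, V, -, hUV⟩ := exists_nhds_injective_sumElim_towerMap (q := 0) (y := x) hT hTi
    (hx.sumElim (injective_of_subsingleton _) fun _ j => j.elim0)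
  exact ⟨U, hU, fun Y hY => (hUV Y hY ∅ (empty_subset V)).comp Sum.inl_injective⟩

/-- The observations of `h` along the tower of height `N` over `Y`, as a map from `Y` to the
`N`-dimensional cube. -/
def orbitRestrict (hT : Continuous T) (N : ℕ) (Y : Set X) (h : C(X, I)) : C(Y, Fin N → I) where
  toFun y i := h (T^[i] y)
  continuous_toFun := continuous_pi fun i => h.continuous.comp
    ((hT.iterate i).comp continuous_subtype_val)

theorem isOpenMap_orbitRestrict_prodMk [CompactSpace X] [T2Space X] (hT : Continuous T)
    {Y Z : Set X} [CompactSpace Y] [CompactSpace Z]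
    (hinj : Injective (Sum.elim (towerMap T p Y) (towerMap T q Z))) :
    IsOpenMap fun h => (orbitRestrict hT p Y h, orbitRestrict hT q Z h) := by
  have he := ((continuous_towerMap hT p Y).sumElim (continuous_towerMap hT q Z)).isClosedEmbedding
    hinj
  refine isOpenMap_iff_nhds_le.2 fun f => (Metric.nhds_basis_ball.map _).ge_iff.2 fun ε hε =>
    Filter.mem_of_superset (Metric.ball_mem_nhds _ (half_pos hε)) fun G hG => ?_
  obtain ⟨hG₁, hG₂⟩ := max_lt_iff.1 (Metric.mem_ball.1 hG)
  let F : C((Fin p × Y) ⊕ (Fin q × Z), I) :=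
    ⟨Sum.elim (fun a => G.1 a.2 a.1) (fun b => G.2 b.2 b.1),
      (continuous_prod_of_discrete_left.2 fun i => (continuous_apply i).comp G.1.continuous).sumElim
        (continuous_prod_of_discrete_left.2 fun j => (continuous_apply j).comp G.2.continuous)⟩
  have hF : ∀ w, dist (F w) (f (Sum.elim (towerMap T p Y) (towerMap T q Z) w)) ≤ ε / 2 := by
    rintro (⟨i, y⟩ | ⟨j, z⟩)
    · exact (dist_le_pi_dist (G.1 y) (orbitRestrict hT p Y f y) i).trans
        ((ContinuousMap.dist_apply_le_dist y).trans hG₁.le)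
    · exact (dist_le_pi_dist (G.2 z) (orbitRestrict hT q Z f z) j).trans
        ((ContinuousMap.dist_apply_le_dist z).trans hG₂.le)
  obtain ⟨h, hhf, hh⟩ :=
    exists_continuousMap_dist_le_of_isClosedEmbedding he f F (half_pos hε).le hF
  refine ⟨h, Metric.mem_ball.2 (hhf.trans_lt (half_lt_self hε)), Prod.ext ?_ ?_⟩
  · ext y i
    exact congrArg _ (hh (.inl (i, y)))
  · ext z j
    exact congrArg _ (hh (.inr (j, z)))

theorem isOpenMap_orbitRestrict [CompactSpace X] [T2Space X] (hT : Continuous T)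
    {Y : Set X} [CompactSpace Y] (hinj : Injective (towerMap T N Y)) :
    IsOpenMap (orbitRestrict hT N Y) :=
  isOpenMap_fst.comp (isOpenMap_orbitRestrict_prodMk (q := 0) (Z := ∅) hT
    (hinj.sumElim (injective_of_subsingleton _) fun _ b => b.1.elim0))

end Tower

section DSet

variable {X : Type*} [TopologicalSpace X] {T : X → X} {d : ℕ} {K : Set (X × X)}

theorem DSet_empty (T : X → X) (d : ℕ) : DSet T d ∅ = univ :=
  eq_univ_of_forall fun _ _ hp => hp.elim

theorem DSet_preimage_swap (T : X → X) (d : ℕ) (K : Set (X × X)) :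
    DSet T d (Prod.swap ⁻¹' K) = DSet T d K :=
  ext fun _ => ⟨fun h p hp => (h p.swap hp).symm, fun h p hp => (h p.swap hp).symm⟩

theorem isOpen_DSet [CompactSpace X] [T2Space X] (hT : Continuous T) (d : ℕ) (hK : IsCompact K) :
    IsOpen (DSet T d K) := by
  refine isOpen_iff_eventually.2 fun h hh =>
    hK.eventually_forall_of_forall_eventually fun p hp => ?_
  have hc : ∀ g : X × X → X, Continuous g →
      Continuous fun z : C(X, I) × X × X => delayMap T d z.1 (g z.2) := fun g hg =>
    continuous_pi fun i => by
      have := hT.iterate i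
      unfold delayMap
      fun_prop
  exact (isOpen_ne_fun (hc _ continuous_fst) (hc _ continuous_snd)).mem_nhds (hh p hp)

variable [CompactSpace X] [T2Space X] {m n p q N l : ℕ}

theorem dense_DSet_of_snd_eq_iterate [NeZero N] (hT : Continuous T) (hK : IsCompact K)
    (hdim : CovDimLE (Prod.fst '' K) m) (hm : 2 * m < min N (2 * d + 1)) (hl : ¬ N ∣ l)
    (hinj : Injective (towerMap T N (Prod.fst '' K))) (hsnd : ∀ z ∈ K, z.2 = T^[l] z.1)
    (hmod : ∀ z ∈ K, ∀ i ≤ 2 * d + l, T^[i % N] z.1 = T^[i] z.1) : Dense (DSet T d K) := by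
  have := isCompact_iff_compactSpace.1 (hK.image continuous_fst)
  have hfinrank : ∀ A ∈ ({(shiftInvariant N (2 * d + 1) l).toAffineSubspace} : Set _),
      Module.finrank ℝ A.direction + m < Fintype.card (Fin N) := by
    rintro _ rfl
    have := two_mul_finrank_shiftInvariant_add_min_le (k := 2 * d + 1) hl
    rw [Submodule.toAffineSubspace_direction, Fintype.card_fin]
    omega
  refine ((hdim.dense_forall_notMem (countable_singleton _) hfinrank).preimage
    (isOpenMap_orbitRestrict hT hinj)).mono fun h hh z hz heq => ?_
  refine hh _ rfl ⟨z.1, mem_image_of_mem _ hz⟩ fun i hi => ?_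
  have hi := congrArg Subtype.val (congrFun heq ⟨i, hi⟩)
  simp only [delayMap, hsnd z hz, ← iterate_add_apply] at hi
  simp only [orbitRestrict, ContinuousMap.coe_mk, Fin.val_ofNat]
  rw [hmod z hz _ (by omega), hmod z hz _ (by omega), hi]

theorem dense_DSet_of_disjoint_towers [NeZero p] (hT : Continuous T) (hK : IsCompact K)
    (hfst : CovDimLE (Prod.fst '' K) m) (hsnd : CovDimLE (Prod.snd '' K) n) (hmn : m + n < q)
    (hq : q ≤ 2 * d + 1)
    (hinj : Injective (Sum.elim (towerMap T p (Prod.fst '' K)) (towerMap T q (Prod.snd '' K))))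
    (hmod : ∀ z ∈ K, ∀ i < q, T^[i % p] z.1 = T^[i] z.1) : Dense (DSet T d K) := by
  have := isCompact_iff_compactSpace.1 (hK.image continuous_fst)
  have := isCompact_iff_compactSpace.1 (hK.image continuous_snd)
  have hcard : m + n < Fintype.card (Fin q) := by rwa [Fintype.card_fin]
  refine ((hfst.dense_forall_comp_ne hsnd hcard fun i => Fin.ofNat p i).preimage
    (isOpenMap_orbitRestrict_prodMk hT hinj)).mono fun h hh z hz heq => ?_
  refine hh ⟨z.1, mem_image_of_mem _ hz⟩ ⟨z.2, mem_image_of_mem _ hz⟩ (funext fun i => ?_)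
  have hi := congrFun heq (i.castLE hq)
  simp only [delayMap, Fin.val_castLE] at hi
  simp only [orbitRestrict, ContinuousMap.coe_mk, comp_apply, Fin.val_ofNat, hmod z hz i i.2, hi]

end DSet

section TruncatedPeriod

variable {X : Type*} {T : X → X} {M N i : ℕ} {x : X}

/-- The least period of `x` under `T` if it is at most `M`, and `M + 1` otherwise. -/
noncomputable def truncatedPeriod (T : X → X) (M : ℕ) (x : X) : ℕ :=
  sInf {n | 0 < n ∧ (n ≤ M → IsPeriodicPt T n x)}

theorem truncatedPeriod_spec (T : X → X) (M : ℕ) (x : X) : 0 < truncatedPeriod T M x ∧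
    (truncatedPeriod T M x ≤ M → IsPeriodicPt T (truncatedPeriod T M x) x) :=
  Nat.sInf_mem (s := {n | 0 < n ∧ (n ≤ M → IsPeriodicPt T n x)})
    ⟨M + 1, M.succ_pos, fun h => absurd h M.not_succ_le_self⟩

theorem truncatedPeriod_pos (T : X → X) (M : ℕ) (x : X) : 0 < truncatedPeriod T M x :=
  (truncatedPeriod_spec T M x).1

theorem truncatedPeriod_le_iff (hN : N ≤ M) : truncatedPeriod T M x ≤ N ↔ x ∈ periodicLE T N := by
  refine ⟨fun h => ?_, ?_⟩
  · exact ⟨_, truncatedPeriod_pos T M x, h, (truncatedPeriod_spec T M x).2 (h.trans hN)⟩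
  · rintro ⟨p, hp, hpN, hpx⟩
    have hle : truncatedPeriod T M x ≤ p := Nat.sInf_le ⟨hp, fun _ => hpx⟩
    exact hle.trans hpN

theorem truncatedPeriod_le_succ (T : X → X) (M : ℕ) (x : X) : truncatedPeriod T M x ≤ M + 1 :=
  Nat.sInf_le ⟨M.succ_pos, fun h => absurd h M.not_succ_le_self⟩

theorem iterate_mod_truncatedPeriod (hi : i ≤ M) : T^[i % truncatedPeriod T M x] x = T^[i] x := by
  rcases le_or_gt (truncatedPeriod T M x) M with h | h
  · exact ((truncatedPeriod_spec T M x).2 h).iterate_mod_apply i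
  · rw [Nat.mod_eq_of_lt (hi.trans_lt h)]

theorem injective_iterate_of_le_truncatedPeriod (hTi : Injective T)
    (hN : N ≤ truncatedPeriod T M x) : Injective fun i : Fin N => T^[i] x := by
  refine .of_lt_imp_ne fun i j hij heq => ?_
  have hper : IsPeriodicPt T (j - i) x := hTi.iterate i (by
    rw [← iterate_add_apply, Nat.add_sub_cancel' (Fin.le_def.1 hij.le)]
    exact heq.symm)
  have : truncatedPeriod T M x ≤ j - i := Nat.sInf_le ⟨Nat.sub_pos_of_lt hij, fun _ => hper⟩
  omega

variable [TopologicalSpace X] [T2Space X]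

theorem isClosed_periodicLE (hT : Continuous T) (N : ℕ) : IsClosed (periodicLE T N) := by
  have h : periodicLE T N = ⋃ p ∈ Icc 1 N, {x | T^[p] x = x} := by
    ext x
    simp [periodicLE, and_assoc]
  rw [h]
  exact (finite_Icc 1 N).isClosed_biUnion fun p _ => isClosed_eq (hT.iterate p) continuous_id

theorem lowerSemicontinuous_truncatedPeriod (hT : Continuous T) (M : ℕ) :
    LowerSemicontinuous (truncatedPeriod T M) := by
  refine lowerSemicontinuous_iff_isClosed_preimage.2 fun N => ?_
  rcases le_or_gt N M with hN | hN
  · have h : truncatedPeriod T M ⁻¹' Iic N = periodicLE T N :=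
      ext fun x => truncatedPeriod_le_iff hN
    exact h ▸ isClosed_periodicLE hT N
  · have h : truncatedPeriod T M ⁻¹' Iic N = univ :=
      eq_univ_of_forall fun x => (truncatedPeriod_le_succ T M x).trans hN
    exact h ▸ isClosed_univ

theorem isLocallyClosed_truncatedPeriod_eq (hT : Continuous T) (M N : ℕ) :
    IsLocallyClosed {x | truncatedPeriod T M x = N} := by
  have h : {x | truncatedPeriod T M x = N} =
      truncatedPeriod T M ⁻¹' Ioi (N - 1) ∩ truncatedPeriod T M ⁻¹' Iic N := by
    ext x
    have := truncatedPeriod_pos T M x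
    simp only [mem_ofPred_eq, mem_inter_iff, mem_preimage, mem_Ioi, mem_Iic]
    omega
  have hlsc := lowerSemicontinuous_truncatedPeriod hT M
  rw [h]
  exact (hlsc.isOpen_preimage _).isLocallyClosed.inter (hlsc.isClosed_preimage _).isLocallyClosed

theorem CovDimLE.of_isCompact_of_subset {m : ℕ} {A Y : Set X} (hA : CovDimLE A m)
    (hY : IsCompact Y) (hYA : Y ⊆ A) : CovDimLE Y m :=
  have := isCompact_iff_compactSpace.1 hY
  hA.of_isClosedEmbedding
    ((continuous_inclusion hYA).isClosedEmbedding (inclusion_injective hYA))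

theorem exists_forall_covDimLE_of_truncatedPeriod_eq {d : ℕ} (hdim : CovDimLE X d)
    (hper : ∀ n : ℕ, 1 ≤ n → n ≤ 2 * d → 2 * covDim (periodicLE T n) < (n : ℕ∞))
    (hM : 2 * d ≤ M) (hN : 0 < N) :
    ∃ m ≤ d, 2 * m < N ∧
      ∀ Y : Set X, IsCompact Y → (∀ y ∈ Y, truncatedPeriod T M y = N) → CovDimLE Y m := by
  rcases le_or_gt N (2 * d) with hNd | hNd
  · have hlt := hper N hN hNd
    obtain ⟨m, hm⟩ : ∃ m : ℕ, covDim (periodicLE T N) = m := by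
      refine (ENat.ne_top_iff_exists.1 fun htop => ?_).imp fun m hm => hm.symm
      rw [htop] at hlt
      simp at hlt
    rw [hm] at hlt
    have hmN : 2 * m < N := by exact_mod_cast hlt
    exact ⟨m, by omega, hmN, fun Y hY hYN =>
      (covDim_le_natCast_iff.1 hm.le).of_isCompact_of_subset hY fun y hy =>
        (truncatedPeriod_le_iff (hNd.trans hM)).1 (hYN y hy).le⟩
  · exact ⟨d, le_rfl, hNd, fun Y hY _ =>
      hdim.of_isClosedEmbedding hY.isClosed.isClosedEmbedding_subtypeVal⟩

end TruncatedPeriod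

/-- `S` is a countable union of compact sets `K` for which `D_K` is dense. Openness of `D_K` is
not recorded, being automatic by `isOpen_DSet`. -/
def IsSigmaGeneric {X : Type*} [TopologicalSpace X] (T : X → X) (d : ℕ) (S : Set (X × X)) : Prop :=
  ∃ K : ℕ → Set (X × X), (⋃ i, K i) = S ∧ ∀ i, IsCompact (K i) ∧ Dense (DSet T d (K i))

namespace IsSigmaGeneric

variable {X : Type*} [TopologicalSpace X] {T : X → X} {d : ℕ} {S S' : Set (X × X)}

theorem empty (T : X → X) (d : ℕ) : IsSigmaGeneric T d ∅ :=
  ⟨fun _ => ∅, iUnion_empty, fun _ => ⟨isCompact_empty, DSet_empty T d ▸ dense_univ⟩⟩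

theorem iUnion {ι : Type*} [Countable ι] {S : ι → Set (X × X)}
    (hS : ∀ i, IsSigmaGeneric T d (S i)) : IsSigmaGeneric T d (⋃ i, S i) := by
  rcases isEmpty_or_nonempty ι with _ | _
  · exact iUnion_of_empty S ▸ empty T d
  choose K hKS hK using hS
  obtain ⟨f, hf⟩ := exists_surjective_nat (ι × ℕ)
  refine ⟨fun n => K (f n).1 (f n).2, ?_, fun n => hK _ _⟩
  calc ⋃ n, K (f n).1 (f n).2 = ⋃ a : ι × ℕ, K a.1 a.2 :=
        hf.iUnion_comp fun a => K a.1 a.2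
    _ = ⋃ (i) (n), K i n := iSup_prod
    _ = ⋃ i, S i := iUnion_congr hKS

theorem union (hS : IsSigmaGeneric T d S) (hS' : IsSigmaGeneric T d S') :
    IsSigmaGeneric T d (S ∪ S') := by
  rw [union_eq_iUnion]
  exact iUnion fun b => by cases b <;> assumption

theorem preimage_swap (hS : IsSigmaGeneric T d S) : IsSigmaGeneric T d (Prod.swap ⁻¹' S) := by
  obtain ⟨K, rfl, hK⟩ := hS
  refine ⟨fun i => Prod.swap ⁻¹' K i, preimage_iUnion.symm, fun i => ⟨?_, ?_⟩⟩
  · rw [← image_swap_eq_preimage_swap]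
    exact (hK i).1.image continuous_swap
  · rw [DSet_preimage_swap]
    exact (hK i).2

theorem of_isLocallyClosed [CompactSpace X] [T2Space X] [SecondCountableTopology X]
    (hS : IsLocallyClosed S)
    (hloc : ∀ z ∈ S, ∃ U ∈ 𝓝 z, ∀ K ⊆ S ∩ U, IsCompact K → Dense (DSet T d K)) :
    IsSigmaGeneric T d S := by
  choose! U hU hUK using hloc
  obtain ⟨t, htS, ht, hSt⟩ := TopologicalSpace.countable_cover_nhdsWithin (s := S)
    fun z hz => mem_nhdsWithin_of_mem_nhds (interior_mem_nhds.2 (hU z hz))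
  have := ht.to_subtype
  have hcover : S = ⋃ z : t, S ∩ interior (U z) := by
    rw [← inter_iUnion, ← biUnion_eq_iUnion t fun z _ => interior (U z), inter_eq_left.2 hSt]
  rw [hcover]
  refine iUnion fun z => ?_
  have := (hS.inter (isOpen_interior (s := U z)).isLocallyClosed).locallyCompactSpace
  obtain ⟨K, hK, hKS⟩ : IsSigmaCompact (S ∩ interior (U z)) :=
    isSigmaCompact_iff_sigmaCompactSpace.2 inferInstance
  refine ⟨K, hKS, fun i => ⟨hK i, hUK z (htS z.2) _ ?_ (hK i)⟩⟩
  exact (subset_iUnion K i).trans (hKS.le.trans (inter_subset_inter_right S interior_subset))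

end IsSigmaGeneric

section Strata

variable {X : Type*} {T : X → X} {d p q N l : ℕ}

/-- The pairs `(x, T^l x)` off the diagonal such that `x` has period `N`. Periods are truncated at
`4 * d` because the delay maps involve the iterates `T^{i + l} x` with `i, l ≤ 2 * d`. -/
def sameOrbitStratum (T : X → X) (d N l : ℕ) : Set (X × X) :=
  {z | truncatedPeriod T (4 * d) z.1 = N ∧ z.2 = T^[l] z.1 ∧ z.1 ≠ z.2}

/-- The pairs of points with periods `p` and `q`, truncated as in `sameOrbitStratum`, whose orbit
segments of length `2 * d + 1` are disjoint. -/
def disjointOrbitStratum (T : X → X) (d p q : ℕ) : Set (X × X) :=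
  {z | truncatedPeriod T (4 * d) z.1 = p ∧ truncatedPeriod T (4 * d) z.2 = q ∧
    ∀ i j : Fin (2 * d + 1), T^[i] z.1 ≠ T^[j] z.2}

theorem disjointOrbitStratum_swap (T : X → X) (d p q : ℕ) :
    Prod.swap ⁻¹' disjointOrbitStratum T d p q = disjointOrbitStratum T d q p :=
  ext fun _ => ⟨fun ⟨hp, hq, h⟩ => ⟨hq, hp, fun i j => (h j i).symm⟩,
    fun ⟨hq, hp, h⟩ => ⟨hp, hq, fun i j => (h j i).symm⟩⟩

theorem exists_eq_iterate_of_iterate_eq (hTi : Injective T) {x y : X} {i j : ℕ} (hji : j ≤ i)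
    (h : T^[i] x = T^[j] y) : y = T^[i - j] x :=
  hTi.iterate j (by rw [← iterate_add_apply, Nat.add_sub_cancel' hji, h])

theorem iUnion_strata_eq (hTi : Injective T) (d : ℕ) :
    (⋃ (N : ℕ) (l : Fin (2 * d + 1)),
        sameOrbitStratum T d N l ∪ Prod.swap ⁻¹' sameOrbitStratum T d N l) ∪
      (⋃ (p : ℕ) (q : ℕ), disjointOrbitStratum T d p q) = {z : X × X | z.1 ≠ z.2} := by
  refine Subset.antisymm (union_subset (iUnion₂_subset fun N l => union_subset ?_ ?_)
    (iUnion₂_subset fun p q => ?_)) ?_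
  · exact fun z hz => hz.2.2
  · exact fun z hz => hz.2.2.symm
  · exact fun z hz => hz.2.2 0 0
  rintro ⟨x, y⟩ (hxy : x ≠ y)
  by_cases h : ∃ i j : Fin (2 * d + 1), T^[i] x = T^[j] y
  · obtain ⟨i, j, hij⟩ := h
    refine Or.inl (mem_iUnion₂.2 ?_)
    rcases le_total j i with hji | hji
    · exact ⟨_, ⟨i - j, by omega⟩, Or.inl
        ⟨rfl, exists_eq_iterate_of_iterate_eq hTi hji hij, hxy⟩⟩
    · exact ⟨_, ⟨j - i, by omega⟩, Or.inr
        ⟨rfl, exists_eq_iterate_of_iterate_eq hTi hji hij.symm, hxy.symm⟩⟩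
  · push Not at h
    exact Or.inr (mem_iUnion₂.2 ⟨_, _, rfl, rfl, h⟩)

variable [TopologicalSpace X] [T2Space X]

theorem isLocallyClosed_sameOrbitStratum (hT : Continuous T) (d N l : ℕ) :
    IsLocallyClosed (sameOrbitStratum T d N l) :=
  ((isLocallyClosed_truncatedPeriod_eq hT _ N).preimage continuous_fst).inter
    ((isClosed_eq continuous_snd ((hT.iterate l).comp continuous_fst)).isLocallyClosed.inter
      (isOpen_ne_fun continuous_fst continuous_snd).isLocallyClosed)

theorem isLocallyClosed_disjointOrbitStratum (hT : Continuous T) (d p q : ℕ) :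
    IsLocallyClosed (disjointOrbitStratum T d p q) := by
  have hopen : IsOpen {z : X × X | ∀ i j : Fin (2 * d + 1), T^[i] z.1 ≠ T^[j] z.2} := by
    simp only [ofPred_forall]
    exact isOpen_iInter_of_finite fun i => isOpen_iInter_of_finite fun j =>
      isOpen_ne_fun ((hT.iterate i).comp continuous_fst) ((hT.iterate j).comp continuous_snd)
  exact ((isLocallyClosed_truncatedPeriod_eq hT _ p).preimage continuous_fst).inter
    (((isLocallyClosed_truncatedPeriod_eq hT _ q).preimage continuous_snd).inter
      hopen.isLocallyClosed)

variable [CompactSpace X] [SecondCountableTopology X]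

theorem isSigmaGeneric_sameOrbitStratum (hT : Continuous T) (hTi : Injective T)
    (hdim : CovDimLE X d)
    (hper : ∀ n : ℕ, 1 ≤ n → n ≤ 2 * d → 2 * covDim (periodicLE T n) < (n : ℕ∞))
    (hl : l ≤ 2 * d) : IsSigmaGeneric T d (sameOrbitStratum T d N l) := by
  refine .of_isLocallyClosed (isLocallyClosed_sameOrbitStratum hT d N l) ?_
  rintro z ⟨rfl, hlz, hz⟩
  have hNpos := truncatedPeriod_pos T (4 * d) z.1
  have : NeZero (truncatedPeriod T (4 * d) z.1) := ⟨hNpos.ne'⟩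
  obtain ⟨m, hmd, hmN, hm⟩ :=
    exists_forall_covDimLE_of_truncatedPeriod_eq (M := 4 * d) hdim hper (by omega) hNpos
  have hndvd : ¬ truncatedPeriod T (4 * d) z.1 ∣ l := fun hdvd => hz (by
    rw [hlz, ← iterate_mod_truncatedPeriod (by omega : l ≤ 4 * d), Nat.mod_eq_zero_of_dvd hdvd,
      iterate_zero_apply])
  obtain ⟨U, hU, hUinj⟩ := exists_nhds_injective_towerMap hT hTi
    (injective_iterate_of_le_truncatedPeriod hTi le_rfl)
  refine ⟨Prod.fst ⁻¹' U, continuous_fst.continuousAt hU, fun K hKU hK => ?_⟩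
  refine dense_DSet_of_snd_eq_iterate hT hK
    (hm _ (hK.image continuous_fst) (forall_mem_image.2 fun w hw => (hKU hw).1.1))
    (lt_min hmN (by omega)) hndvd (hUinj _ (image_subset_iff.2 fun w hw => (hKU hw).2))
    (fun w hw => (hKU hw).1.2.1) fun w hw i hi => ?_
  rw [← (hKU hw).1.1]
  exact iterate_mod_truncatedPeriod (by omega)

theorem isSigmaGeneric_disjointOrbitStratum (hT : Continuous T) (hTi : Injective T)
    (hdim : CovDimLE X d)
    (hper : ∀ n : ℕ, 1 ≤ n → n ≤ 2 * d → 2 * covDim (periodicLE T n) < (n : ℕ∞)) (p q : ℕ) :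
    IsSigmaGeneric T d (disjointOrbitStratum T d p q) := by
  wlog hpq : p ≤ q generalizing p q
  · exact disjointOrbitStratum_swap T d q p ▸ (this q p (le_of_not_ge hpq)).preimage_swap
  refine .of_isLocallyClosed (isLocallyClosed_disjointOrbitStratum hT d p q) ?_
  rintro z ⟨hzp, hzq, hz⟩
  have hp : 0 < p := hzp ▸ truncatedPeriod_pos T (4 * d) z.1
  obtain ⟨m, hmd, hmp, hm⟩ :=
    exists_forall_covDimLE_of_truncatedPeriod_eq (M := 4 * d) hdim hper (by omega) hp
  obtain ⟨n, hnd, hnq, hn⟩ := exists_forall_covDimLE_of_truncatedPeriod_eq (M := 4 * d) hdim hper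
    (by omega) (hp.trans_le hpq)
  obtain ⟨U, hU, V, hV, hUV⟩ := exists_nhds_injective_sumElim_towerMap
    (p := min p (2 * d + 1)) (q := min q (2 * d + 1)) hT hTi
    ((injective_iterate_of_le_truncatedPeriod hTi ((min_le_left _ _).trans hzp.ge)).sumElim
      (injective_iterate_of_le_truncatedPeriod hTi ((min_le_left _ _).trans hzq.ge))
      fun i j => hz (i.castLE (min_le_right _ _)) (j.castLE (min_le_right _ _)))
  have : NeZero (min p (2 * d + 1)) := ⟨by omega⟩
  refine ⟨U ×ˢ V, prod_mem_nhds hU hV, fun K hKU hK => ?_⟩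
  refine dense_DSet_of_disjoint_towers hT hK
    (hm _ (hK.image continuous_fst) (forall_mem_image.2 fun w hw => (hKU hw).1.1))
    (hn _ (hK.image continuous_snd) (forall_mem_image.2 fun w hw => (hKU hw).1.2.1))
    (by omega) (min_le_right _ _) (hUV _ (image_subset_iff.2 fun w hw => (hKU hw).2.1) _
      (image_subset_iff.2 fun w hw => (hKU hw).2.2)) fun w hw i hi => ?_
  rcases le_total p (2 * d + 1) with hle | hle
  · rw [min_eq_left hle, ← (hKU hw).1.1]
    exact iterate_mod_truncatedPeriod (by omega)
  · rw [min_eq_right hle, Nat.mod_eq_of_lt (by omega)]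

end Strata

theorem stmt1_general {X : Type*} [TopologicalSpace X] [CompactSpace X] [T2Space X]
    [SecondCountableTopology X] (T : X → X) (hTc : Continuous T) (hTi : Injective T) (d : ℕ)
    (hdim : covDim X ≤ d)
    (hper : ∀ n : ℕ, 1 ≤ n → n ≤ 2 * d → 2 * covDim (periodicLE T n) < (n : ℕ∞)) :
    ∃ K : ℕ → Set (X × X), (⋃ i, K i) = {p : X × X | p.1 ≠ p.2} ∧
      ∀ i, IsCompact (K i) ∧ IsOpen (DSet T d (K i)) ∧ Dense (DSet T d (K i)) := by
  have hX : CovDimLE X d := covDim_le_natCast_iff.1 hdim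
  obtain ⟨K, hKU, hK⟩ : IsSigmaGeneric T d {p : X × X | p.1 ≠ p.2} := by
    rw [← iUnion_strata_eq hTi d]
    refine .union (.iUnion fun N => .iUnion fun l => ?_) (.iUnion fun p => .iUnion fun q => ?_)
    · have hS := isSigmaGeneric_sameOrbitStratum (N := N) hTc hTi hX hper
        (Nat.lt_succ_iff.1 l.2)
      exact hS.union hS.preimage_swap
    · exact isSigmaGeneric_disjointOrbitStratum hTc hTi hX hper p q
  exact ⟨K, hKU, fun i => ⟨(hK i).1, isOpen_DSet hTc d (hK i).1, (hK i).2⟩⟩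

theorem stmt1 {X : Type*} [MetricSpace X] [CompactSpace X]
    (T : X → X) (hTc : Continuous T) (hTi : Function.Injective T)
    (d : ℕ) (hdim : covDim X = d)
    (hper : ∀ n : ℕ, 1 ≤ n → n ≤ 2 * d →
      2 * covDim (periodicLE T n) < (n : ℕ∞)) :
    ∃ K : ℕ → Set (X × X),
      (⋃ i, K i) = {p : X × X | p.1 ≠ p.2} ∧
      ∀ i, IsCompact (K i) ∧ IsOpen (DSet T d (K i)) ∧ Dense (DSet T d (K i)) :=
  stmt1_general T hTc hTi d hdim.le hper
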